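/- Let m ≥ 1 and let A^0, A^1, A_0, A_1, A_2 ∈ Mat_m(ℂ) be fixed matrices. For u ∈ ℂ∖{0,1}, t_1 ∈ ℂ∖{0}, t_2 ∈ ℂ, define H_u := Tr[ A_0(A^0/u + A^1/(u−1)) − t_1 A_1(A^0/u^2 + A^1/(u−1)^2) + A_2( t_1^2 A^0/u^3 + t_1^2 A^1/(u−1)^3 − t_2 A^0/u^2 − t_2 A^1/(u−1)^2 ) ], H_1 := Tr[ A_1(A^0/u + A^1/(u−1)) − t_1 A_2(A^0/u^2 + A^1/(u−1)^2) + A_0A_0/(2t_1) − t_2 A_0A_1/t_1^2 − t_2^2 A_0A_2/t_1^3 ], and H_2 := Tr[ A_2(A^0/u + A^1/(u−1)) + A_0A_1/t_1 + t_2 A_0A_2/t_1^2 ]. Then the cross-derivatives vanish identically on (ℂ∖{0,1}) × (ℂ∖{0}) × ℂ: ∂H_u/∂t_1 = ∂H_1/∂u, ∂H_u/∂t_2 = ∂H_2/∂u, and ∂H_2/∂t_1 = ∂H_1/∂t_2. Hence the one-form H_u du + H_1 dt_1 + H_2 dt_2 has symmetric coefficient derivatives and the corresponding isomonodromic τ-function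 is well defined. -/

import Mathlib

/-!
The confluent isomonodromic Hamiltonians for the connection
`A(λ) = A⁰/λ + A¹/(λ−1) + A₀/(λ−u) + (t₁A₁+t₂A₂)/(λ−u)² + t₁²A₂/(λ−u)³`:
their cross-derivatives in the deformation parameters `(u, t₁, t₂)` vanish, so the
isomonodromic τ-function is well defined.
-/

noncomputable section

variable {m : ℕ}

/-- `H_u = Tr[A₀(A⁰/u + A¹/(u−1)) − t₁A₁(A⁰/u² + A¹/(u−1)²)
      + A₂(t₁²A⁰/u³ + t₁²A¹/(u−1)³ − t₂A⁰/u² − t₂A¹/(u−1)²)]`. -/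
def Hu (A0 A1 B0 B1 B2 : Matrix (Fin m) (Fin m) ℂ) (u t₁ t₂ : ℂ) : ℂ :=
  (B0 * (u⁻¹ • A0 + (u - 1)⁻¹ • A1)).trace
    - t₁ * (B1 * ((u ^ 2)⁻¹ • A0 + ((u - 1) ^ 2)⁻¹ • A1)).trace
    + (B2 * ((t₁ ^ 2 / u ^ 3) • A0 + (t₁ ^ 2 / (u - 1) ^ 3) • A1
        - (t₂ / u ^ 2) • A0 - (t₂ / (u - 1) ^ 2) • A1)).trace

/-- `H_1 = Tr[A₁(A⁰/u + A¹/(u−1)) − t₁A₂(A⁰/u² + A¹/(u−1)²)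
      + A₀A₀/(2t₁) − t₂A₀A₁/t₁² − t₂²A₀A₂/t₁³]`. -/
def H1 (A0 A1 B0 B1 B2 : Matrix (Fin m) (Fin m) ℂ) (u t₁ t₂ : ℂ) : ℂ :=
  (B1 * (u⁻¹ • A0 + (u - 1)⁻¹ • A1)).trace
    - t₁ * (B2 * ((u ^ 2)⁻¹ • A0 + ((u - 1) ^ 2)⁻¹ • A1)).trace
    + (B0 * B0).trace / (2 * t₁) - t₂ * (B0 * B1).trace / t₁ ^ 2
    - t₂ ^ 2 * (B0 * B2).trace / t₁ ^ 3

/-- `H_2 = Tr[A₂(A⁰/u + A¹/(u−1)) + A₀A₁/t₁ + t₂A₀A₂/t₁²]`. -/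
def H2 (A0 A1 B0 B1 B2 : Matrix (Fin m) (Fin m) ℂ) (u t₁ t₂ : ℂ) : ℂ :=
  (B2 * (u⁻¹ • A0 + (u - 1)⁻¹ • A1)).trace
    + (B0 * B1).trace / t₁ + t₂ * (B0 * B2).trace / t₁ ^ 2

end

/-!
Let `R(u) = A⁰/u + A¹/(u−1)` be the value at `λ = u` of the part of the connection that is regular
there, and put `rᵢ(u) = Tr(Aᵢ R(u))`. Then `R' = −(A⁰/u² + A¹/(u−1)²)` and
`R''/2 = A⁰/u³ + A¹/(u−1)³`, so the Hamiltonians are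

* `H_u = r₀ + t₁ r₁' + (t₁²/2) r₂'' + t₂ r₂'`,
* `H_1 = r₁ + t₁ r₂' + f(t₁, t₂)`,
* `H_2 = r₂ + g(t₁, t₂)`,

where `f` and `g` do not involve `u`. The two identities involving `u` can now be read off: both
sides are `r₁' + t₁ r₂''` in the first and `r₂'` in the second. The third is `∂g/∂t₁ = ∂f/∂t₂`.
-/

section TracePoleSum

variable {𝕜 n : Type*} [NontriviallyNormedField 𝕜] [Fintype n]

theorem hasDerivAt_inv_sub_pow {a x : 𝕜} (k : ℕ) (hx : x ≠ a) :
    HasDerivAt (fun s => ((s - a) ^ k)⁻¹) (-k * ((x - a) ^ (k + 1))⁻¹) x := by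
  have hxa : x - a ≠ 0 := sub_ne_zero.mpr hx
  have hzpow : HasDerivAt (fun s : 𝕜 => (s - a) ^ (-k : ℤ))
      ((-k : ℤ) * (x - a) ^ (-k - 1 : ℤ)) x :=
    (hasDerivAt_zpow (-k) (x - a) (.inl hxa)).comp_sub_const x a
  convert hzpow using 1
  · simp
  · rw [← neg_add', zpow_neg]
    norm_cast

/-- The pairing `Tr(B (A0/u ^ k + A1/(u - 1) ^ k))`. For `k ≥ 1` it is, up to the factor
`(-1) ^ (k - 1) * (k - 1)!`, the `(k - 1)`-st derivative in `u` of `Tr(B R(u))`, where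
`R(u) = A0/u + A1/(u - 1)`; the Hamiltonians depend on `u` only through these functions. -/
def tracePoleSum (A0 A1 B : Matrix n n 𝕜) (k : ℕ) (u : 𝕜) : 𝕜 :=
  (B * ((u ^ k)⁻¹ • A0 + ((u - 1) ^ k)⁻¹ • A1)).trace

theorem tracePoleSum_eq (A0 A1 B : Matrix n n 𝕜) (k : ℕ) (u : 𝕜) :
    tracePoleSum A0 A1 B k u =
      (u ^ k)⁻¹ * (B * A0).trace + ((u - 1) ^ k)⁻¹ * (B * A1).trace := by
  simp [tracePoleSum, mul_add]

theorem hasDerivAt_tracePoleSum (A0 A1 B : Matrix n n 𝕜) (k : ℕ) {u : 𝕜}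
    (hu0 : u ≠ 0) (hu1 : u ≠ 1) :
    HasDerivAt (tracePoleSum A0 A1 B k) (-k * tracePoleSum A0 A1 B (k + 1) u) u := by
  have hpole0 : HasDerivAt (fun s => (s ^ k)⁻¹) (-k * (u ^ (k + 1))⁻¹) u := by
    simpa only [sub_zero] using hasDerivAt_inv_sub_pow k hu0
  have hpole1 := hasDerivAt_inv_sub_pow k hu1
  rw [funext (tracePoleSum_eq A0 A1 B k), tracePoleSum_eq]
  refine ((hpole0.mul_const (B * A0).trace).fun_add
    (hpole1.mul_const (B * A1).trace)).congr_deriv ?_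
  ring

end TracePoleSum

section Hamiltonians

variable {m : ℕ} (A0 A1 B0 B1 B2 : Matrix (Fin m) (Fin m) ℂ) (u t₁ t₂ : ℂ)

theorem Hu_eq_tracePoleSum :
    Hu A0 A1 B0 B1 B2 u t₁ t₂ =
      tracePoleSum A0 A1 B0 1 u - t₁ * tracePoleSum A0 A1 B1 2 u
        + t₁ ^ 2 * tracePoleSum A0 A1 B2 3 u - t₂ * tracePoleSum A0 A1 B2 2 u := by
  simp only [Hu, tracePoleSum_eq, mul_add, mul_sub, Matrix.mul_smul, Matrix.trace_add,
    Matrix.trace_sub, Matrix.trace_smul, smul_eq_mul]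
  ring

theorem H1_eq_tracePoleSum :
    H1 A0 A1 B0 B1 B2 u t₁ t₂ =
      tracePoleSum A0 A1 B1 1 u - t₁ * tracePoleSum A0 A1 B2 2 u
        + (B0 * B0).trace / (2 * t₁) - t₂ * (B0 * B1).trace / t₁ ^ 2
        - t₂ ^ 2 * (B0 * B2).trace / t₁ ^ 3 := by
  simp only [H1, tracePoleSum, pow_one]

theorem H2_eq_tracePoleSum :
    H2 A0 A1 B0 B1 B2 u t₁ t₂ =
      tracePoleSum A0 A1 B2 1 u + (B0 * B1).trace / t₁ + t₂ * (B0 * B2).trace / t₁ ^ 2 := by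
  simp only [H2, tracePoleSum, pow_one]

theorem hasDerivAt_Hu_t₁ :
    HasDerivAt (fun s => Hu A0 A1 B0 B1 B2 u s t₂)
      (-tracePoleSum A0 A1 B1 2 u + 2 * t₁ * tracePoleSum A0 A1 B2 3 u) t₁ := by
  simp only [Hu_eq_tracePoleSum]
  have hlinear := (hasDerivAt_id' t₁).mul_const (tracePoleSum A0 A1 B1 2 u)
  have hquadratic := (hasDerivAt_pow 2 t₁).mul_const (tracePoleSum A0 A1 B2 3 u)
  refine (((hlinear.const_sub _).fun_add hquadratic).sub_const _).congr_deriv ?_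
  simp

theorem hasDerivAt_Hu_t₂ :
    HasDerivAt (fun s => Hu A0 A1 B0 B1 B2 u t₁ s) (-tracePoleSum A0 A1 B2 2 u) t₂ := by
  simp only [Hu_eq_tracePoleSum]
  simpa only [one_mul] using
    ((hasDerivAt_id' t₂).mul_const (tracePoleSum A0 A1 B2 2 u)).const_sub _

theorem hasDerivAt_H1_t₂ :
    HasDerivAt (fun s => H1 A0 A1 B0 B1 B2 u t₁ s)
      (-(B0 * B1).trace / t₁ ^ 2 - 2 * t₂ * (B0 * B2).trace / t₁ ^ 3) t₂ := by
  simp only [H1_eq_tracePoleSum]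
  have hlinear := ((hasDerivAt_id' t₂).mul_const (B0 * B1).trace).div_const (t₁ ^ 2)
  have hquadratic := ((hasDerivAt_pow 2 t₂).mul_const (B0 * B2).trace).div_const (t₁ ^ 3)
  refine ((hlinear.const_sub _).fun_sub hquadratic).congr_deriv ?_
  simp [neg_div]

variable {t₁} in
theorem hasDerivAt_H2_t₁ (ht₁ : t₁ ≠ 0) :
    HasDerivAt (fun s => H2 A0 A1 B0 B1 B2 u s t₂)
      (-(B0 * B1).trace / t₁ ^ 2 - 2 * t₂ * (B0 * B2).trace / t₁ ^ 3) t₁ := by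
  simp only [H2_eq_tracePoleSum, div_eq_mul_inv]
  have hinv := (hasDerivAt_inv ht₁).const_mul (B0 * B1).trace
  have hinv_sq : HasDerivAt (fun s : ℂ => (s ^ 2)⁻¹) (-2 * (t₁ ^ 3)⁻¹) t₁ := by
    simpa using hasDerivAt_inv_sub_pow 2 ht₁
  refine ((hinv.const_add _).fun_add
    (hinv_sq.const_mul (t₂ * (B0 * B2).trace))).congr_deriv ?_
  ring

variable {u} in
theorem hasDerivAt_H1_u (hu0 : u ≠ 0) (hu1 : u ≠ 1) :
    HasDerivAt (fun s => H1 A0 A1 B0 B1 B2 s t₁ t₂)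
      (-tracePoleSum A0 A1 B1 2 u + 2 * t₁ * tracePoleSum A0 A1 B2 3 u) u := by
  simp only [H1_eq_tracePoleSum]
  have hB1 := hasDerivAt_tracePoleSum A0 A1 B1 1 hu0 hu1
  have hB2 := (hasDerivAt_tracePoleSum A0 A1 B2 2 hu0 hu1).const_mul t₁
  refine ((((hB1.fun_sub hB2).add_const _).sub_const _).sub_const _).congr_deriv ?_
  push_cast
  ring

variable {u} in
theorem hasDerivAt_H2_u (hu0 : u ≠ 0) (hu1 : u ≠ 1) :
    HasDerivAt (fun s => H2 A0 A1 B0 B1 B2 s t₁ t₂) (-tracePoleSum A0 A1 B2 2 u) u := by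
  simp only [H2_eq_tracePoleSum]
  have hB2 := hasDerivAt_tracePoleSum A0 A1 B2 1 hu0 hu1
  refine ((hB2.add_const _).add_const _).congr_deriv ?_
  simp

end Hamiltonians

/-- the cross-derivatives of the confluent Hamiltonians vanish identically on
`(ℂ∖{0,1}) × (ℂ∖{0}) × ℂ`: `∂H_u/∂t₁ = ∂H_1/∂u`, `∂H_u/∂t₂ = ∂H_2/∂u`,
`∂H_2/∂t₁ = ∂H_1/∂t₂`.  Hence `H_u du + H_1 dt₁ + H_2 dt₂` has symmetric coefficient
derivatives and the isomonodromic τ-function is well defined. -/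
theorem statement17 (m : ℕ) (hm : 1 ≤ m)
    (A0 A1 B0 B1 B2 : Matrix (Fin m) (Fin m) ℂ)
    (u t₁ t₂ : ℂ) (hu0 : u ≠ 0) (hu1 : u ≠ 1) (ht₁ : t₁ ≠ 0) :
    deriv (fun s : ℂ => Hu A0 A1 B0 B1 B2 u s t₂) t₁
        = deriv (fun s : ℂ => H1 A0 A1 B0 B1 B2 s t₁ t₂) u ∧
    deriv (fun s : ℂ => Hu A0 A1 B0 B1 B2 u t₁ s) t₂
        = deriv (fun s : ℂ => H2 A0 A1 B0 B1 B2 s t₁ t₂) u ∧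
    deriv (fun s : ℂ => H2 A0 A1 B0 B1 B2 u s t₂) t₁
        = deriv (fun s : ℂ => H1 A0 A1 B0 B1 B2 u t₁ s) t₂ := by
  exact ⟨(hasDerivAt_Hu_t₁ A0 A1 B0 B1 B2 u t₁ t₂).deriv.trans
      (hasDerivAt_H1_u A0 A1 B0 B1 B2 t₁ t₂ hu0 hu1).deriv.symm,
    (hasDerivAt_Hu_t₂ A0 A1 B0 B1 B2 u t₁ t₂).deriv.trans
      (hasDerivAt_H2_u A0 A1 B0 B1 B2 t₁ t₂ hu0 hu1).deriv.symm,
    (hasDerivAt_H2_t₁ A0 A1 B0 B1 B2 u t₂ ht₁).deriv.trans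
      (hasDerivAt_H1_t₂ A0 A1 B0 B1 B2 u t₁ t₂).deriv.symm⟩
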